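/- arXiv:1612.06771 — 4 statements merged into one kernel-verified Lean document; each statement's English description precedes it below -/
import Mathlib

section
/- Let X be an ∞-pseudo-metric space and r > 0. If ℳ is an r-orthogonal subspace S×T-matrix of X and 𝒜 is an r-orthogonal subspace T×R-matrix of X, then the matrix ∩-product ℳ ·∩ 𝒜 is an r-orthogonal S×R-matrix. -/
open Set

/-- `C` and `D` are scale-`r`-disjoint: their open `r`-neighborhoods are disjoint. -/
def ScaleDisjoint {X : Type*} [PseudoEMetricSpace X] (r : ℝ) (C D : Set X) : Prop :=
  Metric.thickening r C ∩ Metric.thickening r D = ∅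

/-- A subspace matrix is `r`-orthogonal if each of its columns is scale-`r`-disjoint. -/
def ROrthogonal {X S T : Type*} [PseudoEMetricSpace X] (r : ℝ) (M : S → T → Set X) : Prop :=
  ∀ t : T, ∀ s s' : S, s ≠ s' → ScaleDisjoint r (M s t) (M s' t)

section ScaleDisjoint

variable {X : Type*} [PseudoEMetricSpace X] {r : ℝ} {C D : Set X}

theorem scaleDisjoint_iff_disjoint :
    ScaleDisjoint r C D ↔ Disjoint (Metric.thickening r C) (Metric.thickening r D) :=
  disjoint_iff_inter_eq_empty.symm

theorem ScaleDisjoint.mono {C' D' : Set X} (h : ScaleDisjoint r C D) (hC : C' ⊆ C) (hD : D' ⊆ D) :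
    ScaleDisjoint r C' D' :=
  scaleDisjoint_iff_disjoint.2 <| (scaleDisjoint_iff_disjoint.1 h).mono
    (Metric.thickening_subset_of_subset r hC) (Metric.thickening_subset_of_subset r hD)

theorem scaleDisjoint_iUnion_left {ι : Sort*} {C : ι → Set X} :
    ScaleDisjoint r (⋃ i, C i) D ↔ ∀ i, ScaleDisjoint r (C i) D := by
  simp only [scaleDisjoint_iff_disjoint, Metric.thickening_iUnion, disjoint_iUnion_left]

theorem scaleDisjoint_iUnion_right {ι : Sort*} {D : ι → Set X} :
    ScaleDisjoint r C (⋃ i, D i) ↔ ∀ i, ScaleDisjoint r C (D i) := by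
  simp only [scaleDisjoint_iff_disjoint, Metric.thickening_iUnion, disjoint_iUnion_right]

end ScaleDisjoint

/-- Let `X` be an `∞`-pseudo-metric space and `r > 0`. If `M` is an `r`-orthogonal subspace
`S×T`-matrix of `X` and `A` is an `r`-orthogonal subspace `T×R`-matrix of `X`, then the matrix
`∩`-product `M ·∩ A`, whose `(s, q)` entry is `⋃ t, M s t ∩ A t q`, is an `r`-orthogonal
`S×R`-matrix. -/
theorem matInterProd_rOrthogonal {X S T R : Type*} [PseudoEMetricSpace X] (r : ℝ) (hr : 0 < r)
    (M : S → T → Set X) (A : T → R → Set X)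
    (hM : ROrthogonal r M) (hA : ROrthogonal r A) :
    ROrthogonal r (fun s q => ⋃ t : T, M s t ∩ A t q) := by
  intro q s s' hs
  refine scaleDisjoint_iUnion_left.2 fun t => scaleDisjoint_iUnion_right.2 fun t' => ?_
  rcases eq_or_ne t t' with rfl | ht
  · exact (hM t s s' hs).mono inter_subset_left inter_subset_left
  · exact (hA q t t' ht).mono inter_subset_right inter_subset_right
end

section
/- Let X and Y be ∞-pseudo-metric spaces and r > 0. If X is of scale-r-dimension 0 and Y is of scale-r-dimension 0, then X × Y with the supremum ∞-pseudo-metric is of scale-r-dimension 0. -/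
open Set
open scoped ENNReal

/-- `y` is joined to `x` by a scale-`r`-chain in `A`: a finite sequence of points of `A`
starting at `x` and ending at `y`, consecutive points of which have intersecting open
`r`-balls. -/
def ScaleChain {X : Type*} [PseudoEMetricSpace X] (r : ℝ) (A : Set X) (x y : X) : Prop :=
  ∃ n : ℕ, ∃ c : ℕ → X, (∀ i ≤ n, c i ∈ A) ∧ c 0 = x ∧ c n = y ∧
    ∀ i < n,
      (EMetric.ball (c i) (ENNReal.ofReal r) ∩
        EMetric.ball (c (i + 1)) (ENNReal.ofReal r)).Nonempty

/-- The scale-`r`-component of `x` in `A`: all points of `A` joined to `x` by a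
scale-`r`-chain in `A`. -/
def ScaleComponent {X : Type*} [PseudoEMetricSpace X] (r : ℝ) (A : Set X) (x : X) : Set X :=
  {y | ScaleChain r A x y}

/-- `A` has scale-`r`-dimension `0`: there is a finite bound on the diameters of all
scale-`r`-components of `A`. -/
def ScaleDimZero {X : Type*} [PseudoEMetricSpace X] (r : ℝ) (A : Set X) : Prop :=
  ∃ M : ℝ≥0∞, M ≠ ⊤ ∧ ∀ x ∈ A, EMetric.diam (ScaleComponent r A x) ≤ M

section

variable {X Y : Type*} [PseudoEMetricSpace X] [PseudoEMetricSpace Y]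

theorem ScaleChain.map {r : ℝ} {A : Set X} {B : Set Y} {x y : X} {f : X → Y}
    (h : ScaleChain r A x y) (hf : LipschitzWith 1 f) (hAB : MapsTo f A B) :
    ScaleChain r B (f x) (f y) := by
  obtain ⟨n, c, hcA, rfl, rfl, hc⟩ := h
  have mapsTo_ball (i : ℕ) :
      MapsTo f (Metric.eball (c i) (ENNReal.ofReal r))
        (Metric.eball (f (c i)) (ENNReal.ofReal r)) := by
    simpa only [ENNReal.coe_one, one_mul] using
      hf.mapsTo_eball one_ne_zero (c i) (ENNReal.ofReal r)
  refine ⟨n, f ∘ c, fun i hi ↦ hAB (hcA i hi), rfl, rfl, fun i hi ↦ ?_⟩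
  obtain ⟨z, hz, hz'⟩ := hc i hi
  exact ⟨f z, mapsTo_ball i hz, mapsTo_ball (i + 1) hz'⟩

theorem scaleComponent_prod_subset (r : ℝ) (A : Set X) (B : Set Y) (p : X × Y) :
    ScaleComponent r (A ×ˢ B) p ⊆ ScaleComponent r A p.1 ×ˢ ScaleComponent r B p.2 :=
  fun _ hq ↦ ⟨hq.map LipschitzWith.prod_fst mapsTo_fst_prod,
    hq.map LipschitzWith.prod_snd mapsTo_snd_prod⟩

theorem ediam_prod_le (s : Set X) (t : Set Y) :
    Metric.ediam (s ×ˢ t) ≤ max (Metric.ediam s) (Metric.ediam t) :=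
  Metric.ediam_le fun _ hp _ hq ↦
    max_le_max (Metric.edist_le_ediam_of_mem hp.1 hq.1)
      (Metric.edist_le_ediam_of_mem hp.2 hq.2)

theorem scaleDimZero_prod_general {r : ℝ} {A : Set X} {B : Set Y}
    (hA : ScaleDimZero r A) (hB : ScaleDimZero r B) : ScaleDimZero r (A ×ˢ B) := by
  obtain ⟨M, hM, hAM⟩ := hA
  obtain ⟨N, hN, hBN⟩ := hB
  refine ⟨max M N, (max_lt hM.lt_top hN.lt_top).ne, fun p ⟨hpA, hpB⟩ ↦ ?_⟩
  calc
    Metric.ediam (ScaleComponent r (A ×ˢ B) p)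
    _ ≤ Metric.ediam (ScaleComponent r A p.1 ×ˢ ScaleComponent r B p.2) :=
      Metric.ediam_mono (scaleComponent_prod_subset r A B p)
    _ ≤ max (Metric.ediam (ScaleComponent r A p.1)) (Metric.ediam (ScaleComponent r B p.2)) :=
      ediam_prod_le _ _
    _ ≤ max M N := max_le_max (hAM p.1 hpA) (hBN p.2 hpB)

end

/-- Let `X` and `Y` be `∞`-pseudo-metric spaces and `r > 0`. If `X` is of
scale-`r`-dimension `0` and `Y` is of scale-`r`-dimension `0`, then `X × Y` with the supremum
`∞`-pseudo-metric is of scale-`r`-dimension `0`. -/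
theorem scaleDimZero_prod {X Y : Type*} [PseudoEMetricSpace X] [PseudoEMetricSpace Y]
    (r : ℝ) (hr : 0 < r) (hX : ScaleDimZero r (univ : Set X))
    (hY : ScaleDimZero r (univ : Set Y)) :
    ScaleDimZero r (univ : Set (X × Y)) := by
  simpa only [univ_prod_univ] using scaleDimZero_prod_general hX hY
end

section
/- Let X be an ∞-pseudo-metric space. If X has an APD profile (i.e. X has Asymptotic Property D), then X has Asymptotic Property C. -/
open Set
open scoped ENNReal

/-- `A` is the union of at most `n` subsets of scale-`s`-dimension `0`. -/
def UnionAtMost {X : Type*} [PseudoEMetricSpace X] (n : ℕ) (s : ℝ) (A : Set X) : Prop :=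
  ∃ G : Fin n → Set X, A = ⋃ j, G j ∧ ∀ j, ScaleDimZero s (G j)

/-- `(α 0, …, α k)` is an APD profile of `X`: each `α i` is a non-decreasing
nonnegative function of positive reals, `α 0` is constant, and for every non-decreasing array
`(r 0, …, r k)` of positive reals there is a decomposition `X = F 0 ∪ … ∪ F k` where each
`F i` is the union of at most `⌊α i (r (i-1))⌋` subsets of scale-`r i`-dimension `0`
(`α 0` being applied to its constant value for `i = 0`). -/
def IsAPDProfile (X : Type*) [PseudoEMetricSpace X] (k : ℕ) (α : ℕ → ℝ → ℝ) : Prop :=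
  (∀ x y : ℝ, α 0 x = α 0 y) ∧
  (∀ i ≤ k, MonotoneOn (α i) (Set.Ioi (0 : ℝ))) ∧
  (∀ i ≤ k, ∀ x : ℝ, 0 < x → 0 ≤ α i x) ∧
  (∀ r : ℕ → ℝ, (∀ i ≤ k, 0 < r i) → (∀ i < k, r i ≤ r (i + 1)) →
    ∃ F : ℕ → Set X, (⋃ i ∈ Finset.range (k + 1), F i) = univ ∧
      ∀ i ≤ k, UnionAtMost (Nat.floor (α i (if i = 0 then 0 else r (i - 1)))) (r i) (F i))

/-- `X` has Asymptotic Property C: for every sequence `(r i)_{i ≥ 1}` of positive reals there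
exist finitely many subsets `X 1, …, X m` covering `X` such that the `i`-th one is of
scale-`r i`-dimension `0`. -/
def AsymptoticPropertyC (X : Type*) [PseudoEMetricSpace X] : Prop :=
  ∀ r : ℕ → ℝ, (∀ i, 0 < r i) →
    ∃ m : ℕ, ∃ F : Fin m → Set X, (⋃ i, F i) = Set.univ ∧
      ∀ i : Fin m, ScaleDimZero (r (i.val + 1)) (F i)

/-!
Since the number of pieces of `F i` is bounded in terms of `r (i - 1)` alone, the scales of an APD
profile can be chosen one after the other: once the first `i` members of the decomposition are
known to use the scales `r 1, …, r N` of Property C, the number `n` of pieces of the next member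
is known, and its scale can be chosen to be at least `r 1, …, r (N + n)`. As scale-dimension `0`
passes to smaller scales, the pieces in order then have scale-dimension `0` at the scales
`r 1, r 2, …`.
-/

section

variable {X : Type*} [PseudoEMetricSpace X]

theorem ScaleChain.mono_scale {r s : ℝ} {A : Set X} {x y : X} (h : ScaleChain r A x y)
    (hrs : r ≤ s) : ScaleChain s A x y := by
  obtain ⟨n, c, hcA, hc₀, hcn, hc⟩ := h
  have ball_subset (z : X) :
      Metric.eball z (ENNReal.ofReal r) ⊆ Metric.eball z (ENNReal.ofReal s) :=
    Metric.eball_subset_eball (ENNReal.ofReal_le_ofReal hrs)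
  exact ⟨n, c, hcA, hc₀, hcn, fun i hi =>
    (hc i hi).mono (inter_subset_inter (ball_subset _) (ball_subset _))⟩

theorem monotone_scaleComponent (A : Set X) (x : X) : Monotone fun r => ScaleComponent r A x :=
  fun _ _ hrs _ hy => hy.mono_scale hrs

theorem antitone_scaleDimZero (A : Set X) : Antitone fun r => ScaleDimZero r A := by
  rintro r s hrs ⟨M, hM, hdiam⟩
  exact ⟨M, hM, fun x hx =>
    (Metric.ediam_mono (monotone_scaleComponent A x hrs)).trans (hdiam x hx)⟩

theorem finSigmaFinEquiv_lt_sum_range_succ {l : ℕ} (n : ℕ → ℕ) (p : (i : Fin l) × Fin (n i)) :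
    (finSigmaFinEquiv p : ℕ) < ∑ k ∈ Finset.range (p.1 + 1), n k := by
  rw [finSigmaFinEquiv_apply, Finset.sum_range_succ, ← Fin.sum_univ_eq_sum_range]
  exact Nat.add_lt_add_left p.2.isLt _

theorem exists_eq_apply_sum_range {M : Type*} [AddCommMonoid M] (f : ℕ → M → M) :
    ∃ n : ℕ → M, ∀ i, n i = f i (∑ k ∈ Finset.range i, n k) := by
  let N : ℕ → M := Nat.rec 0 fun i m => m + f i m
  have sum_eq (i : ℕ) : ∑ k ∈ Finset.range i, f k (N k) = N i :=
    Finset.sum_range_induction _ N rfl i fun _ _ => rfl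
  exact ⟨fun i => f i (N i), fun i => by rw [sum_eq]⟩

/- Laying the pieces of `F 0`, `F 1`, … end to end, those of `F i` occupy positions below
`n 0 + ⋯ + n i`. -/
theorem exists_iUnion_eq_of_unionAtMost {l : ℕ} {n : ℕ → ℕ} {r : ℕ → ℝ} {s : Fin l → ℝ}
    {F : Fin l → Set X} (hF : ∀ i : Fin l, UnionAtMost (n i) (s i) (F i))
    (hrs : ∀ i : Fin l, ∀ j < ∑ k ∈ Finset.range (i + 1), n k, r j ≤ s i) :
    ∃ m : ℕ, ∃ H : Fin m → Set X, ⋃ j, H j = ⋃ i, F i ∧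
      ∀ j : Fin m, ScaleDimZero (r j) (H j) := by
  choose G hFG hG using hF
  let e := finSigmaFinEquiv (n := fun i : Fin l => n i)
  let piece : (i : Fin l) × Fin (n i) → Set X := fun p => G p.1 p.2
  refine ⟨_, piece ∘ e.symm, ?_, fun j => ?_⟩
  · calc ⋃ j, piece (e.symm j) = ⋃ p, piece p := e.symm.iSup_comp
      _ = ⋃ i, ⋃ t, G i t := iUnion_sigma piece
      _ = ⋃ i, F i := iUnion_congr fun i => (hFG i).symm
  · obtain ⟨p, rfl⟩ := e.surjective j
    rw [Function.comp_apply, e.symm_apply_apply]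
    exact antitone_scaleDimZero _ (hrs p.1 _ (finSigmaFinEquiv_lt_sum_range_succ n p)) (hG p.1 p.2)

/- Here `s (i + 1)` plays the role of the scale `r i` of an APD profile; `s 0` is an extra scale
that makes the bounds `ν i (s i)` uniform in `i`. -/
theorem asymptoticPropertyC_of_apdProfile_general {l : ℕ} {ν : ℕ → ℝ → ℕ}
    (h : ∀ s : ℕ → ℝ, (∀ i, 0 < s i) → Monotone s → ∃ F : Fin l → Set X,
      ⋃ i, F i = univ ∧ ∀ i : Fin l, UnionAtMost (ν i (s i)) (s (i + 1)) (F i)) :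
    AsymptoticPropertyC X := by
  intro r hr
  obtain ⟨n, hn⟩ := exists_eq_apply_sum_range fun i N => ν i (partialSups r N)
  let s : ℕ → ℝ := fun i => partialSups r (∑ k ∈ Finset.range i, n k)
  have s_pos (i : ℕ) : 0 < s i := (hr 0).trans_le (le_partialSups_of_le r (Nat.zero_le _))
  have s_mono : Monotone s :=
    (partialSups_monotone r).comp (Finset.sum_mono_set n |>.comp Finset.range_mono)
  obtain ⟨F, hcover, hF⟩ := h s s_pos s_mono
  obtain ⟨m, H, hHF, hH⟩ := exists_iUnion_eq_of_unionAtMost (r := fun j => r (j + 1))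
    (fun i => (hn i).symm ▸ hF i) fun _ _ hj => le_partialSups_of_le r hj
  exact ⟨m, H, hHF.trans hcover, hH⟩

end

/-- Let `X` be an `∞`-pseudo-metric space. If `X` has an APD profile (i.e. `X` has Asymptotic
Property D), then `X` has Asymptotic Property C. -/
theorem asymptoticPropertyC_of_apdProfile {X : Type*} [PseudoEMetricSpace X]
    (h : ∃ k : ℕ, ∃ α : ℕ → ℝ → ℝ, IsAPDProfile X k α) :
    AsymptoticPropertyC X := by
  obtain ⟨k, α, α₀_const, -, -, decomposition⟩ := h
  refine asymptoticPropertyC_of_apdProfile_general (l := k + 1) (ν := fun i x => ⌊α i x⌋₊)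
    fun s s_pos s_mono => ?_
  obtain ⟨F, hcover, hF⟩ := decomposition (fun i => s (i + 1)) (fun i _ => s_pos (i + 1))
    fun i _ => s_mono (Nat.le_succ (i + 1))
  refine ⟨fun i => F i, ?_, fun ⟨i, hi⟩ => ?_⟩
  · simpa only [eq_univ_iff_forall, mem_iUnion, Finset.mem_range, Fin.exists_iff] using hcover
  · cases i with
    | zero => simpa only [if_true, α₀_const 0 (s 0)] using hF 0 (Nat.zero_le k)
    | succ i => exact hF (i + 1) (Nat.le_of_lt_succ hi)
end

section
/- Let X and Y be subspaces of an ∞-pseudo-metric space Z. If (1,α) is an APD profile of X and (1,β) is an APD profile of Y, then (2, max(α,β)) is an APD profile of X ∪ Y; that is, for all reals 0 < r ≤ s there is a decomposition X ∪ Y = W_0 ∪ W_1 such that W_0 is the union of at most 2 subsets of scale-r-dimension 0 and W_1 is the union of at most ⌊max(α(r),β(r))⌋ subsets of scale-s-dimension 0. -/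
/-!
Decompose `X = X₀ ∪ X₁` at the scales `r ≤ s`. A set `G` of scale-`s`-dimension `0` absorbs every
set `H` of scale-`t`-dimension `0` once `t` exceeds the diameters of the components of `G` by a
few multiples of `s`: a scale-`s`-chain in `G ∪ H` visits `H` along a scale-`t`-chain, so `G ∪ H`
is again of scale-`s`-dimension `0`. Hence, decomposing `Y = Y₀ ∪ Y₁` at the scales `r ≤ t` for a
`t` this large for all pieces of `X₁`, the pieces of `X₁` and `Y₁` can be united in pairs, and the
larger of the two numbers of pieces suffices for `X₁ ∪ Y₁`.
-/

open Set
open scoped ENNReal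

/-- `(1, α)` is an APD profile of the subspace `A` of `Z`: for all reals `0 < r ≤ s` there is
a decomposition `A = A₀ ∪ A₁` with `A₀` of scale-`r`-dimension `0` and `A₁` the union of at
most `⌊α r⌋` subsets of scale-`s`-dimension `0`. -/
def APDPairOn {Z : Type*} [PseudoEMetricSpace Z] (A : Set Z) (α : ℝ → ℝ) : Prop :=
  ∀ r s : ℝ, 0 < r → r ≤ s →
    ∃ A₀ A₁ : Set Z, A₀ ∪ A₁ = A ∧ ScaleDimZero r A₀ ∧ UnionAtMost (Nat.floor (α r)) s A₁

section

open Filter Function Relation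

variable {Z : Type*} [PseudoEMetricSpace Z] {r s t : ℝ} {A B G H : Set Z} {x y z : Z}

/-- One step of a scale-`r`-chain in `A`: points of `A` whose open `r`-balls intersect. The
scale-`r`-components of `A` are the classes of the equivalence relation on `A` it generates. -/
def ScaleAdj (r : ℝ) (A : Set Z) (x y : Z) : Prop :=
  x ∈ A ∧ y ∈ A ∧
    (Metric.eball x (ENNReal.ofReal r) ∩ Metric.eball y (ENNReal.ofReal r)).Nonempty

namespace ScaleAdj

theorem symm (h : ScaleAdj r A x y) : ScaleAdj r A y x :=
  ⟨h.2.1, h.1, inter_comm _ _ ▸ h.2.2⟩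

theorem edist_le (h : ScaleAdj r A x y) : edist x y ≤ 2 * ENNReal.ofReal r := by
  obtain ⟨-, -, z, hzx, hzy⟩ := h
  calc edist x y ≤ edist z x + edist z y := edist_triangle_left x y z
    _ ≤ ENNReal.ofReal r + ENNReal.ofReal r := add_le_add (le_of_lt hzx) (le_of_lt hzy)
    _ = 2 * ENNReal.ofReal r := (two_mul _).symm

theorem of_edist_lt (hx : x ∈ A) (hy : y ∈ A) (h : edist x y < ENNReal.ofReal r) :
    ScaleAdj r A x y :=
  ⟨hx, hy, x, Metric.mem_eball_self (pos_of_gt h), h⟩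

end ScaleAdj

theorem scaleChain_iff_reflTransGen :
    ScaleChain r A x y ↔ x ∈ A ∧ ReflTransGen (ScaleAdj r A) x y := by
  constructor
  · rintro ⟨n, c, hcA, rfl, rfl, hc⟩
    refine ⟨hcA 0 n.zero_le, ReflTransGen.lift c le_rfl 0 n
      (reflTransGen_of_succ_of_le (ScaleAdj r A on c) (fun i hi => ?_) n.zero_le)⟩
    exact ⟨hcA i hi.2.le, hcA (i + 1) hi.2, hc i hi.2⟩
  · rintro ⟨hx, h⟩
    induction h using ReflTransGen.head_induction_on with
    | refl =>
      exact ⟨0, fun _ => y, fun _ _ => hx, rfl, rfl, fun _ hi => (Nat.not_lt_zero _ hi).elim⟩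
    | @head x w hxw _ ih =>
      obtain ⟨n, c, hcA, rfl, hn, hc⟩ := ih hxw.2.1
      refine ⟨n + 1, fun i => i.casesOn x c, ?_, rfl, hn, ?_⟩
      · rintro (_ | i) hi
        exacts [hx, hcA i (Nat.le_of_succ_le_succ hi)]
      · rintro (_ | i) hi
        exacts [hxw.2.2, hc i (Nat.lt_of_succ_lt_succ hi)]

namespace ScaleChain

theorem refl (hx : x ∈ A) : ScaleChain r A x x :=
  scaleChain_iff_reflTransGen.mpr ⟨hx, .refl⟩

theorem right_mem (h : ScaleChain r A x y) : y ∈ A := by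
  obtain ⟨n, c, hcA, -, rfl, -⟩ := h
  exact hcA n le_rfl

theorem trans (hxy : ScaleChain r A x y) (hyz : ScaleChain r A y z) : ScaleChain r A x z := by
  rw [scaleChain_iff_reflTransGen] at *
  exact ⟨hxy.1, hxy.2.trans hyz.2⟩

theorem tail (hxy : ScaleChain r A x y) (hyz : ScaleAdj r A y z) : ScaleChain r A x z :=
  hxy.trans (scaleChain_iff_reflTransGen.mpr ⟨hyz.1, .single hyz⟩)

theorem symm (h : ScaleChain r A x y) : ScaleChain r A y x :=
  have : Std.Symm (ScaleAdj r A) := ⟨fun _ _ => ScaleAdj.symm⟩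
  scaleChain_iff_reflTransGen.mpr ⟨h.right_mem, symm_of _ (scaleChain_iff_reflTransGen.mp h).2⟩

theorem of_scaleComponent_subset (h : ScaleChain r A x y) (hB : ScaleComponent r A x ⊆ B) :
    ScaleChain r B x y := by
  rw [scaleChain_iff_reflTransGen] at h
  obtain ⟨hx, hxy⟩ := h
  induction hxy with
  | refl => exact refl (hB (refl hx))
  | @tail y z hxy hyz ih =>
    have hy : ScaleChain r A x y := scaleChain_iff_reflTransGen.mpr ⟨hx, hxy⟩
    exact ih.tail ⟨hB hy, hB (hy.tail hyz), hyz.2.2⟩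

end ScaleChain

theorem scaleDimZero_iff_edist_le :
    ScaleDimZero r A ↔ ∃ M : ℝ≥0∞, M ≠ ⊤ ∧ ∀ x y, ScaleChain r A x y → edist x y ≤ M := by
  refine exists_congr fun M => and_congr_right fun _ => ⟨fun hM x y hxy => ?_, fun hM x _ => ?_⟩
  · have hx : x ∈ A := hxy.symm.right_mem
    have hxx : x ∈ ScaleComponent r A x := ScaleChain.refl hx
    exact (Metric.edist_le_ediam_of_mem hxx hxy).trans (hM x hx)
  · exact Metric.ediam_le fun y hy z hz => hM y z (hy.symm.trans hz)

theorem ScaleDimZero.empty : ScaleDimZero r (∅ : Set Z) :=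
  ⟨0, ENNReal.zero_ne_top, fun _ hx => hx.elim⟩

/- Between two successive visits to `H` the chain runs inside a single scale-`s`-component of
`G`, so it covers a distance less than `t`: the visits to `H` form a scale-`t`-chain. -/
theorem ScaleChain.union_cases {M : ℝ≥0∞} (hM : ∀ x y, ScaleChain s G x y → edist x y ≤ M)
    (ht : 2 * ENNReal.ofReal s + M + 2 * ENNReal.ofReal s < ENNReal.ofReal t)
    (hx : x ∈ H) (h : ScaleChain s (G ∪ H) x y) :
    ScaleChain t H x y ∨
      ∃ v g, ScaleChain t H x v ∧ ScaleAdj s (G ∪ H) v g ∧ ScaleChain s G g y := by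
  rw [scaleChain_iff_reflTransGen] at h
  obtain ⟨-, hxy⟩ := h
  induction hxy with
  | refl => exact .inl (.refl hx)
  | @tail y z _ hyz ih =>
    rcases ih with hxy | ⟨v, g, hxv, hvg, hgy⟩ <;> rcases hyz.2.1 with hz | hz
    · exact .inr ⟨y, z, hxy, hyz, .refl hz⟩
    · have hlt : edist y z < ENNReal.ofReal t :=
        (hyz.edist_le.trans le_add_self).trans_lt ht
      exact .inl (hxy.tail (.of_edist_lt hxy.right_mem hz hlt))
    · exact .inr ⟨v, g, hxv, hvg, hgy.tail ⟨hgy.right_mem, hz, hyz.2.2⟩⟩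
    · have hlt : edist v z < ENNReal.ofReal t :=
        calc edist v z ≤ edist v g + edist g y + edist y z := edist_triangle4 v g y z
          _ ≤ 2 * ENNReal.ofReal s + M + 2 * ENNReal.ofReal s :=
            add_le_add (add_le_add hvg.edist_le (hM g y hgy)) hyz.edist_le
          _ < ENNReal.ofReal t := ht
      exact .inl (hxv.tail (.of_edist_lt hxv.right_mem hz hlt))

theorem ScaleChain.edist_le_of_union {M N : ℝ≥0∞}
    (hM : ∀ x y, ScaleChain s G x y → edist x y ≤ M)
    (hN : ∀ x y, ScaleChain t H x y → edist x y ≤ N)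
    (ht : 2 * ENNReal.ofReal s + M + 2 * ENNReal.ofReal s < ENNReal.ofReal t)
    (hx : x ∈ H) (h : ScaleChain s (G ∪ H) x y) :
    edist x y ≤ N + 2 * ENNReal.ofReal s + M := by
  rcases h.union_cases hM ht hx with hxy | ⟨v, g, hxv, hvg, hgy⟩
  · exact (hN x y hxy).trans (le_self_add.trans le_self_add)
  · exact (edist_triangle4 x v g y).trans
      (add_le_add (add_le_add (hN x v hxv) hvg.edist_le) (hM g y hgy))

theorem ScaleDimZero.eventually_union (hG : ScaleDimZero s G) :
    ∀ᶠ t in atTop, ∀ H : Set Z, ScaleDimZero t H → ScaleDimZero s (G ∪ H) := by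
  obtain ⟨M, hMtop, hM⟩ := scaleDimZero_iff_edist_le.mp hG
  have hfin : 2 * ENNReal.ofReal s + M + 2 * ENNReal.ofReal s < ⊤ := by finiteness
  filter_upwards [ENNReal.tendsto_ofReal_atTop.eventually_const_lt hfin] with t ht H hH
  obtain ⟨N, hNtop, hN⟩ := scaleDimZero_iff_edist_le.mp hH
  set C := N + 2 * ENNReal.ofReal s + M
  refine scaleDimZero_iff_edist_le.mpr ⟨C + C, by finiteness, fun x y hxy => ?_⟩
  by_cases hmeet : ∃ h ∈ H, ScaleChain s (G ∪ H) x h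
  · obtain ⟨h, hh, hxh⟩ := hmeet
    exact (edist_triangle_left x y h).trans (add_le_add
      (hxh.symm.edist_le_of_union hM hN ht hh) ((hxh.symm.trans hxy).edist_le_of_union hM hN ht hh))
  · have hsub : ScaleComponent s (G ∪ H) x ⊆ G := fun z hz =>
      hz.right_mem.resolve_right fun hzH => hmeet ⟨z, hzH, hz⟩
    exact (hM x y (hxy.of_scaleComponent_subset hsub)).trans (le_add_self.trans le_self_add)

namespace UnionAtMost

variable {m n : ℕ}

theorem one (h : ScaleDimZero s A) : UnionAtMost 1 s A :=
  ⟨fun _ => A, (iUnion_const A).symm, fun _ => h⟩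

theorem empty (n : ℕ) : UnionAtMost n s (∅ : Set Z) :=
  ⟨fun _ => ∅, iUnion_empty.symm, fun _ => .empty⟩

theorem union (hA : UnionAtMost m s A) (hB : UnionAtMost n s B) :
    UnionAtMost (m + n) s (A ∪ B) := by
  obtain ⟨G, rfl, hG⟩ := hA
  obtain ⟨H, rfl, hH⟩ := hB
  refine ⟨Fin.append G H, ?_, (Fin.forall_fin_add _).mpr ⟨by simpa using hG, by simpa using hH⟩⟩
  rw [← finSumFinEquiv.surjective.iUnion_comp, iUnion_sum]
  simp

theorem mono (hmn : m ≤ n) (h : UnionAtMost m s A) : UnionAtMost n s A := by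
  simpa [Nat.add_sub_cancel' hmn] using h.union (empty (n - m))

theorem eventually_union (hA : UnionAtMost n s A) :
    ∀ᶠ t in atTop, ∀ B : Set Z, UnionAtMost n t B → UnionAtMost n s (A ∪ B) := by
  obtain ⟨G, rfl, hG⟩ := hA
  filter_upwards [eventually_all.mpr fun j => (hG j).eventually_union] with t ht
  rintro _ ⟨H, rfl, hH⟩
  exact ⟨fun j => G j ∪ H j, (iUnion_union_distrib G H).symm, fun j => ht j (H j) (hH j)⟩

end UnionAtMost

/-- `(m, α)` is an APD profile of `A`, where `a r` stands for `⌊α r⌋`: for all reals `0 < r ≤ s`,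
`A` is the union of at most `m` sets of scale-`r`-dimension `0` and at most `a r` sets of
scale-`s`-dimension `0`. A real-valued `α ≥ 0` enters the notion only through `⌊α⌋`. -/
def APDProfileOn (A : Set Z) (m : ℕ) (a : ℝ → ℕ) : Prop :=
  ∀ r s : ℝ, 0 < r → r ≤ s →
    ∃ A₀ A₁ : Set Z, A₀ ∪ A₁ = A ∧ UnionAtMost m r A₀ ∧ UnionAtMost (a r) s A₁

theorem APDPairOn.apdProfileOn {α : ℝ → ℝ} (h : APDPairOn A α) :
    APDProfileOn A 1 fun r => ⌊α r⌋₊ := fun r s hr hrs =>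
  let ⟨A₀, A₁, hA, hA₀, hA₁⟩ := h r s hr hrs
  ⟨A₀, A₁, hA, .one hA₀, hA₁⟩

theorem apdPair_union_general {X Y : Set Z} {m n : ℕ} {a b : ℝ → ℕ}
    (hX : APDProfileOn X m a) (hY : APDProfileOn Y n b) :
    APDProfileOn (X ∪ Y) (m + n) fun r => max (a r) (b r) := by
  intro r s hr hrs
  obtain ⟨X₀, X₁, rfl, hX₀, hX₁⟩ := hX r s hr hrs
  obtain ⟨t, ht, hst⟩ := ((hX₁.mono (le_max_left (a r) (b r))).eventually_union.and
    (eventually_ge_atTop s)).exists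
  obtain ⟨Y₀, Y₁, rfl, hY₀, hY₁⟩ := hY r t hr (hrs.trans hst)
  exact ⟨X₀ ∪ Y₀, X₁ ∪ Y₁, union_union_union_comm X₀ Y₀ X₁ Y₁, hX₀.union hY₀,
    ht Y₁ (hY₁.mono (le_max_right (a r) (b r)))⟩

end

/-- Let `X` and `Y` be subspaces of an `∞`-pseudo-metric space `Z`. If `(1, α)` is an APD
profile of `X` and `(1, β)` is an APD profile of `Y`, then `(2, max(α, β))` is an APD profile
of `X ∪ Y`: for all reals `0 < r ≤ s` there is a decomposition `X ∪ Y = W₀ ∪ W₁` such that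
`W₀` is the union of at most `2` subsets of scale-`r`-dimension `0` and `W₁` is the union of
at most `⌊max (α r) (β r)⌋` subsets of scale-`s`-dimension `0`. -/
theorem apdPair_union {Z : Type*} [PseudoEMetricSpace Z] (X Y : Set Z) (α β : ℝ → ℝ)
    (hαmono : MonotoneOn α (Set.Ioi (0 : ℝ))) (hαnonneg : ∀ t : ℝ, 0 < t → 0 ≤ α t)
    (hβmono : MonotoneOn β (Set.Ioi (0 : ℝ))) (hβnonneg : ∀ t : ℝ, 0 < t → 0 ≤ β t)
    (hX : APDPairOn X α) (hY : APDPairOn Y β) :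
    ∀ r s : ℝ, 0 < r → r ≤ s →
      ∃ W₀ W₁ : Set Z, W₀ ∪ W₁ = X ∪ Y ∧ UnionAtMost 2 r W₀ ∧
        UnionAtMost (Nat.floor (max (α r) (β r))) s W₁ := by
  simpa only [APDProfileOn, Nat.floor_mono.map_max] using
    apdPair_union_general hX.apdProfileOn hY.apdProfileOn
end
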